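/- Under assumption (B2), the inhomogeneous Martin kernel is determined by the homogeneous one: for all words v, w ∈ 𝒲 with v ≠ w, k(v,w) = k_hom(v,w)·R(v)·N^{−|v|}/(Σ_{v̂∼v} m(v̂)), and for v = w, k(v,v) = 1/m(v). -/

import Mathlib

open Classical

namespace Martin

/-- Finite words over the alphabet `Fin N` (the empty list is the empty word `∅`;
`w ++ [i]` is the word `wi` and `w.dropLast` is the parent `w⁻`). -/
abbrev Word (N : ℕ) := List (Fin N)

/-- The mass of a word: `m(w₁⋯wₙ) = m(w₁)⋯m(wₙ)`, `m(∅) = 1`. -/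
noncomputable def mW {N : ℕ} (m : Fin N → ℝ) (w : Word N) : ℝ := (w.map m).prod

/-- Total mass of the equivalence class of `v`: `Σ_{v̂ ∼ v} m(v̂)`. -/
noncomputable def massCl {N : ℕ} (sim : Word N → Word N → Prop) (m : Fin N → ℝ)
    (v : Word N) : ℝ :=
  ∑ᶠ u ∈ {u : Word N | sim u v}, mW m u

/-- Transition probability: `p(v,w) = m(w)/(Σ_{v̂∼v} m(v̂))` if `w = v̂i` for some
`v̂ ∼ v`, `i ∈ 𝒜`, and `0` otherwise. -/
noncomputable def pTrans {N : ℕ} (sim : Word N → Word N → Prop) (m : Fin N → ℝ)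
    (v w : Word N) : ℝ :=
  if ∃ v' : Word N, ∃ i : Fin N, sim v' v ∧ w = v' ++ [i] then mW m w / massCl sim m v
  else 0

/-- `n`-step transition probabilities: `p₀(v,w) = δ_v(w)`,
`pₙ(v,w) = Σ_u pₙ₋₁(v,u) p(u,w)`. -/
noncomputable def pn {N : ℕ} (sim : Word N → Word N → Prop) (m : Fin N → ℝ) :
    ℕ → Word N → Word N → ℝ
  | 0, v, w => if w = v then 1 else 0
  | n + 1, v, w => ∑ᶠ u : Word N, pn sim m n v u * pTrans sim m u w

/-- The Green function `g(v,w) = p_{|w|−|v|}(v,w)` (it equals `0` when `|w| < |v|`,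
by truncated subtraction and since then `v ≠ w`). -/
noncomputable def green {N : ℕ} (sim : Word N → Word N → Prop) (m : Fin N → ℝ)
    (v w : Word N) : ℝ :=
  pn sim m (w.length - v.length) v w

/-- The function `q(v,w) = g(v,w)·(Σ_{v̂∼v} m(v̂))/m(w)` for `v ≠ w`, `q(v,v) = 1`. -/
noncomputable def qfun {N : ℕ} (sim : Word N → Word N → Prop) (m : Fin N → ℝ)
    (v w : Word N) : ℝ :=
  if v = w then 1 else green sim m v w * massCl sim m v / mW m w

/-- The Martin kernel `k(v,w) = g(v,w)/g(∅,w)`. -/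
noncomputable def mkernel {N : ℕ} (sim : Word N → Word N → Prop) (m : Fin N → ℝ)
    (v w : Word N) : ℝ :=
  green sim m v w / green sim m [] w

/-- `R(w)`: the number of words equivalent to `w`. -/
noncomputable def Rnum {N : ℕ} (sim : Word N → Word N → Prop) (w : Word N) : ℕ :=
  Set.ncard {u : Word N | sim u w}

/-- Assumption (B2): for every word `w`, either all equivalent words have the same mass,
or all equivalent words have equivalent parents. -/
def B2 {N : ℕ} (sim : Word N → Word N → Prop) (m : Fin N → ℝ) : Prop :=
  ∀ w : Word N, (∀ w', sim w' w → mW m w' = mW m w) ∨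
    (∀ w', sim w' w → sim w'.dropLast w.dropLast)


/-!
The function `q(v, w) = g(v, w) · (Σ_{v̂ ∼ v} m(v̂)) / m(w)` is the same for all `m` with (B2).
For `|v| ≤ |w|`, decomposing `g(v, wi)` along the last step shows that `q(v, wi)` depends only on
the class of `w`. Hence by (B2), when `|v| < |w|`, either `m` or `q(v, ·)` is constant on the class
of `w`, so the mean of their product over this class is the product of their means. The recursion
for `g` then says that `q(v, wi)` is the plain average of `q(v, ·)` over the class of `w`, in which
the mass no longer occurs. As `g(∅, w) = m(w)`, the kernel is `k(v, w) = q(v, w) / Σ_{v̂ ∼ v} m(v̂)`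
for `v ≠ w`, and two mass distributions with (B2) are compared by dividing.
-/

section FiniteSums

variable {α M : Type*}

theorem finsum_mem_const [AddCommMonoid M] (s : Set α) (c : M) :
    ∑ᶠ _ ∈ s, c = s.ncard • c := by
  rcases s.finite_or_infinite with hs | hs
  · rw [finsum_mem_eq_finite_toFinset_sum _ hs, Finset.sum_const, Set.ncard_eq_toFinset_card s hs]
  · rcases eq_or_ne c 0 with rfl | hc
    · simp
    · rw [hs.ncard, zero_smul, finsum_mem_eq_zero_of_infinite]
      simpa [Function.support_const hc] using hs

theorem ncard_mul_finsum_mem_mul_of_eq_const [CommSemiring M] [NoZeroDivisors M]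
    {s : Set α} (f : α → M) {g : α → M} {c : M} (hg : ∀ a ∈ s, g a = c) :
    s.ncard * ∑ᶠ a ∈ s, f a * g a = (∑ᶠ a ∈ s, f a) * ∑ᶠ a ∈ s, g a := by
  have hfg : ∑ᶠ a ∈ s, f a * g a = (∑ᶠ a ∈ s, f a) * c := by
    rw [finsum_mem_mul]
    exact finsum_mem_congr rfl fun a ha => by rw [hg a ha]
  have hgc : ∑ᶠ a ∈ s, g a = s.ncard * c := by
    rw [finsum_mem_congr rfl hg, finsum_mem_const, nsmul_eq_mul]
  rw [hfg, hgc, mul_left_comm]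

end FiniteSums

section WordChain

variable {N : ℕ} {sim : Word N → Word N → Prop} {m m' : Fin N → ℝ}

theorem setOf_sim_congr (hsim : Equivalence sim) {v w : Word N} (h : sim v w) :
    {u | sim u v} = {u | sim u w} :=
  Set.ext fun _ => ⟨fun hu => hsim.trans hu h, fun hu => hsim.trans hu (hsim.symm h)⟩

theorem massCl_congr (hsim : Equivalence sim) {v w : Word N} (h : sim v w) :
    massCl sim m v = massCl sim m w := by
  simp only [massCl, setOf_sim_congr hsim h]

theorem finite_setOf_sim (hlen : ∀ v w, sim v w → v.length = w.length) (w : Word N) :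
    {u | sim u w}.Finite :=
  (List.finite_length_eq (Fin N) w.length).subset fun u hu => hlen u w hu

theorem sim_induction (hlen : ∀ v w, sim v w → v.length = w.length) {P : Word N → Prop}
    (nil : P []) (append_singleton : ∀ w i, (∀ u ∈ {u | sim u w}, P u) → P (w ++ [i]))
    (w : Word N) : P w := by
  induction hn : w.length generalizing w with
  | zero => rwa [List.eq_nil_of_length_eq_zero hn]
  | succ n ih =>
    obtain rfl | ⟨w, i, rfl⟩ := List.eq_nil_or_concat' w
    · exact nil
    · rw [List.length_append, List.length_singleton, Nat.succ_inj] at hn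
      exact append_singleton w i fun u hu => ih u ((hlen u w hu).trans hn)

theorem Rnum_ne_zero (hsim : Equivalence sim)
    (hlen : ∀ v w, sim v w → v.length = w.length) (w : Word N) : Rnum sim w ≠ 0 :=
  Set.ncard_ne_zero_of_mem (hsim.refl w) (finite_setOf_sim hlen w)

theorem mW_pos (hm : ∀ a, 0 < m a) (w : Word N) : 0 < mW m w :=
  List.prod_pos (by simpa using fun a _ => hm a)

theorem massCl_pos (hsim : Equivalence sim) (hlen : ∀ v w, sim v w → v.length = w.length)
    (hm : ∀ a, 0 < m a) (w : Word N) : 0 < massCl sim m w := by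
  rw [massCl, finsum_mem_eq_finite_toFinset_sum _ (finite_setOf_sim hlen w)]
  exact Finset.sum_pos (fun u _ => mW_pos hm u) ⟨w, by simpa using hsim.refl w⟩

theorem mW_const (c : ℝ) (w : Word N) : mW (fun _ => c) w = c ^ w.length := by
  simp [mW]

theorem massCl_const (hlen : ∀ v w, sim v w → v.length = w.length) (c : ℝ) (w : Word N) :
    massCl sim (fun _ => c) w = Rnum sim w * c ^ w.length := by
  have hmW : ∀ u ∈ {u | sim u w}, mW (fun _ => c) u = c ^ w.length := fun u hu => by
    rw [mW_const, hlen u w hu]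
  rw [massCl, finsum_mem_congr rfl hmW, finsum_mem_const, nsmul_eq_mul, Rnum]

theorem B2_const (hlen : ∀ v w, sim v w → v.length = w.length) (c : ℝ) :
    B2 sim (fun _ => c) :=
  fun w => .inl fun u hu => by rw [mW_const, mW_const, hlen u w hu]

theorem pTrans_append_singleton (hsim : Equivalence sim) (u w : Word N) (i : Fin N) :
    pTrans sim m u (w ++ [i]) = if sim u w then mW m (w ++ [i]) / massCl sim m w else 0 := by
  have hparent : (∃ v j, sim v u ∧ w ++ [i] = v ++ [j]) ↔ sim u w := by
    constructor
    · rintro ⟨v, j, hvu, hwv⟩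
      rw [(List.append_inj' hwv rfl).1]
      exact hsim.symm hvu
    · exact fun h => ⟨w, i, hsim.symm h, rfl⟩
  simp only [pTrans, hparent]
  split_ifs with h
  · rw [massCl_congr hsim h]
  · rfl

theorem pn_succ_append_singleton (hsim : Equivalence sim) (n : ℕ) (v w : Word N) (i : Fin N) :
    pn sim m (n + 1) v (w ++ [i]) =
      (∑ᶠ u ∈ {u | sim u w}, pn sim m n v u) * (mW m (w ++ [i]) / massCl sim m w) := by
  rw [pn, finsum_mem_mul, finsum_mem_def]
  refine finsum_congr fun u => ?_
  simp only [pTrans_append_singleton hsim, Set.indicator_apply, Set.mem_ofPred_eq, mul_ite,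
    mul_zero]

theorem green_of_length_le {v w : Word N} (h : w.length ≤ v.length) :
    green sim m v w = if w = v then 1 else 0 := by
  rw [green, Nat.sub_eq_zero_of_le h, pn]

theorem green_self (v : Word N) : green sim m v v = 1 := by
  rw [green_of_length_le le_rfl, if_pos rfl]

theorem green_append_singleton (hsim : Equivalence sim)
    (hlen : ∀ v w, sim v w → v.length = w.length) {v w : Word N} (h : v.length ≤ w.length)
    (i : Fin N) :
    green sim m v (w ++ [i]) =
      (∑ᶠ u ∈ {u | sim u w}, green sim m v u) * (mW m (w ++ [i]) / massCl sim m w) := by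
  have hsum : ∑ᶠ u ∈ {u | sim u w}, green sim m v u =
      ∑ᶠ u ∈ {u | sim u w}, pn sim m (w.length - v.length) v u :=
    finsum_mem_congr rfl fun u hu => by rw [green, hlen u w hu]
  rw [hsum, green, List.length_append, List.length_singleton, Nat.sub_add_comm h,
    pn_succ_append_singleton hsim]

theorem green_nil (hsim : Equivalence sim) (hlen : ∀ v w, sim v w → v.length = w.length)
    (hm : ∀ a, 0 < m a) (w : Word N) : green sim m [] w = mW m w := by
  induction w using sim_induction hlen with
  | nil => simp [green_self, mW]
  | append_singleton w i ih =>
    rw [green_append_singleton hsim hlen (Nat.zero_le _), finsum_mem_congr rfl ih, ← massCl,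
      mul_div_cancel₀ _ (massCl_pos hsim hlen hm w).ne']

theorem qfun_of_ne {v w : Word N} (h : v ≠ w) :
    qfun sim m v w = green sim m v w * massCl sim m v / mW m w :=
  if_neg h

theorem green_eq_qfun_mul_mW_div (hsim : Equivalence sim)
    (hlen : ∀ v w, sim v w → v.length = w.length) (hm : ∀ a, 0 < m a) {v w : Word N}
    (h : v ≠ w) : green sim m v w = qfun sim m v w * mW m w / massCl sim m v := by
  have hmassCl := (massCl_pos hsim hlen hm v).ne'
  have hmW := (mW_pos hm w).ne'
  rw [qfun_of_ne h]
  field_simp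

theorem qfun_of_length_le {v w : Word N} (h : w.length ≤ v.length) :
    qfun sim m v w = if v = w then 1 else 0 := by
  split_ifs with hvw
  · exact if_pos hvw
  · rw [qfun_of_ne hvw, green_of_length_le h, if_neg (Ne.symm hvw), zero_mul, zero_div]

theorem qfun_append_singleton (hsim : Equivalence sim)
    (hlen : ∀ v w, sim v w → v.length = w.length) (hm : ∀ a, 0 < m a) {v w : Word N}
    (h : v.length ≤ w.length) (i : Fin N) :
    qfun sim m v (w ++ [i]) =
      (∑ᶠ u ∈ {u | sim u w}, green sim m v u) * massCl sim m v / massCl sim m w := by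
  have hmW := (mW_pos hm (w ++ [i])).ne'
  have hne : v ≠ w ++ [i] := by
    rintro rfl
    simp at h
  rw [qfun_of_ne hne, green_append_singleton hsim hlen h]
  field_simp

theorem qfun_append_singleton_of_length_eq (hsim : Equivalence sim)
    (hlen : ∀ v w, sim v w → v.length = w.length) (hm : ∀ a, 0 < m a) {v w : Word N}
    (h : v.length = w.length) (i : Fin N) :
    qfun sim m v (w ++ [i]) = if sim v w then 1 else 0 := by
  have hgreen : ∀ u ∈ {u | sim u w}, green sim m v u = if u = v then 1 else 0 :=
    fun u hu => green_of_length_le ((hlen u w hu).trans h.symm).le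
  have hsum : ∑ᶠ u ∈ {u | sim u w}, green sim m v u = if sim v w then 1 else 0 := by
    rw [finsum_mem_congr rfl hgreen, finsum_mem_def, finsum_eq_single _ v]
    · simp [Set.indicator_apply]
    · intro u hu
      simp [Set.indicator_apply, hu]
  rw [qfun_append_singleton hsim hlen hm h.le, hsum]
  split_ifs with hvw
  · rw [one_mul, massCl_congr hsim hvw, div_self (massCl_pos hsim hlen hm w).ne']
  · rw [zero_mul, zero_div]

theorem qfun_eq_of_sim_dropLast (hsim : Equivalence sim)
    (hlen : ∀ v w, sim v w → v.length = w.length) (hm : ∀ a, 0 < m a) {v u w : Word N}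
    (hu : v.length < u.length) (hw : v.length < w.length) (h : sim u.dropLast w.dropLast) :
    qfun sim m v u = qfun sim m v w := by
  obtain rfl | ⟨u, i, rfl⟩ := List.eq_nil_or_concat' u
  · simp at hu
  obtain rfl | ⟨w, j, rfl⟩ := List.eq_nil_or_concat' w
  · simp at hw
  rw [List.length_append, List.length_singleton, Nat.lt_succ_iff] at hu hw
  rw [List.dropLast_concat, List.dropLast_concat] at h
  rw [qfun_append_singleton hsim hlen hm hu, qfun_append_singleton hsim hlen hm hw,
    setOf_sim_congr hsim h, massCl_congr hsim h]

theorem Rnum_mul_finsum_qfun_mul_mW (hsim : Equivalence sim)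
    (hlen : ∀ v w, sim v w → v.length = w.length) (hm : ∀ a, 0 < m a) (hB2 : B2 sim m)
    {v w : Word N} (h : v.length < w.length) :
    Rnum sim w * ∑ᶠ u ∈ {u | sim u w}, qfun sim m v u * mW m u =
      (∑ᶠ u ∈ {u | sim u w}, qfun sim m v u) * massCl sim m w := by
  rcases hB2 w with hmW | hparent
  · exact ncard_mul_finsum_mem_mul_of_eq_const _ hmW
  · have hq : ∀ u ∈ {u | sim u w}, qfun sim m v u = qfun sim m v w := fun u hu =>
      qfun_eq_of_sim_dropLast hsim hlen hm (hlen u w hu ▸ h) h (hparent u hu)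
    simpa only [Rnum, massCl, mul_comm] using ncard_mul_finsum_mem_mul_of_eq_const (mW m) hq

theorem qfun_append_singleton_of_length_lt (hsim : Equivalence sim)
    (hlen : ∀ v w, sim v w → v.length = w.length) (hm : ∀ a, 0 < m a) (hB2 : B2 sim m)
    {v w : Word N} (h : v.length < w.length) (i : Fin N) :
    qfun sim m v (w ++ [i]) = (∑ᶠ u ∈ {u | sim u w}, qfun sim m v u) / Rnum sim w := by
  have hv := (massCl_pos hsim hlen hm v).ne'
  have hw := (massCl_pos hsim hlen hm w).ne'
  have hR : (Rnum sim w : ℝ) ≠ 0 := Nat.cast_ne_zero.2 (Rnum_ne_zero hsim hlen w)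
  have hgreen : ∀ u ∈ {u | sim u w},
      green sim m v u = qfun sim m v u * mW m u * (massCl sim m v)⁻¹ := fun u hu =>
    green_eq_qfun_mul_mW_div hsim hlen hm fun hvu => (hlen u w hu ▸ h).ne (congrArg _ hvu)
  calc
    qfun sim m v (w ++ [i])
    _ = (∑ᶠ u ∈ {u | sim u w}, qfun sim m v u * mW m u) / massCl sim m w := by
      rw [qfun_append_singleton hsim hlen hm h.le, finsum_mem_congr rfl hgreen,
        ← finsum_mem_mul, inv_mul_cancel_right₀ hv]
    _ = (∑ᶠ u ∈ {u | sim u w}, qfun sim m v u) / Rnum sim w := by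
      rw [div_eq_div_iff hw hR, mul_comm, Rnum_mul_finsum_qfun_mul_mW hsim hlen hm hB2 h]

theorem qfun_eq_qfun (hsim : Equivalence sim) (hlen : ∀ v w, sim v w → v.length = w.length)
    (hm : ∀ a, 0 < m a) (hm' : ∀ a, 0 < m' a) (hB2 : B2 sim m) (hB2' : B2 sim m')
    (v w : Word N) : qfun sim m v w = qfun sim m' v w := by
  induction w using sim_induction hlen with
  | nil => rw [qfun_of_length_le (Nat.zero_le _), qfun_of_length_le (Nat.zero_le _)]
  | append_singleton w i ih =>
    rcases lt_trichotomy v.length w.length with h | h | h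
    · rw [qfun_append_singleton_of_length_lt hsim hlen hm hB2 h,
        qfun_append_singleton_of_length_lt hsim hlen hm' hB2' h, finsum_mem_congr rfl ih]
    · rw [qfun_append_singleton_of_length_eq hsim hlen hm h,
        qfun_append_singleton_of_length_eq hsim hlen hm' h]
    · have hle : (w ++ [i]).length ≤ v.length := by simpa using h
      rw [qfun_of_length_le hle, qfun_of_length_le hle]

theorem mkernel_self (hsim : Equivalence sim) (hlen : ∀ v w, sim v w → v.length = w.length)
    (hm : ∀ a, 0 < m a) (v : Word N) : mkernel sim m v v = 1 / mW m v := by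
  rw [mkernel, green_self, green_nil hsim hlen hm]

theorem mkernel_eq_qfun_div_massCl (hsim : Equivalence sim)
    (hlen : ∀ v w, sim v w → v.length = w.length) (hm : ∀ a, 0 < m a) {v w : Word N}
    (h : v ≠ w) : mkernel sim m v w = qfun sim m v w / massCl sim m v := by
  rw [mkernel, green_nil hsim hlen hm, green_eq_qfun_mul_mW_div hsim hlen hm h, div_right_comm,
    mul_div_cancel_right₀ _ (mW_pos hm w).ne']

theorem mkernel_via_homogeneous_general (hsim : Equivalence sim)
    (hlen : ∀ v w, sim v w → v.length = w.length)
    (hm : ∀ a, 0 < m a) (hm' : ∀ a, 0 < m' a) (hB2 : B2 sim m) (hB2' : B2 sim m') :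
    (∀ v w, v ≠ w →
      mkernel sim m v w = mkernel sim m' v w * massCl sim m' v / massCl sim m v) ∧
    ∀ v, mkernel sim m v v = 1 / mW m v := by
  refine ⟨fun v w hvw => ?_, mkernel_self hsim hlen hm⟩
  rw [mkernel_eq_qfun_div_massCl hsim hlen hm hvw, mkernel_eq_qfun_div_massCl hsim hlen hm' hvw,
    div_mul_cancel₀ _ (massCl_pos hsim hlen hm' v).ne', qfun_eq_qfun hsim hlen hm hm' hB2 hB2']

end WordChain

/-- Theorem 4.3: under (B2) the inhomogeneous Martin kernel is
determined by the homogeneous one: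
`k(v,w) = k_hom(v,w)·R(v)·N^{−|v|}/(Σ_{v̂∼v} m(v̂))` for `v ≠ w`, and
`k(v,v) = 1/m(v)`. -/
theorem mkernel_via_homogeneous {N : ℕ} (hN : 2 ≤ N)
    (sim : Word N → Word N → Prop) (hsim : Equivalence sim)
    (hlen : ∀ v w : Word N, sim v w → v.length = w.length)
    (m : Fin N → ℝ) (hm : ∀ a, m a ∈ Set.Ioo (0 : ℝ) 1)
    (hm1 : ∑ a, m a = 1) (hB2 : B2 sim m) :
    (∀ v w : Word N, v ≠ w →
      mkernel sim m v w =
        mkernel sim (fun _ : Fin N => (N : ℝ)⁻¹) v w * (Rnum sim v : ℝ) *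
          ((N : ℝ) ^ v.length)⁻¹ / massCl sim m v) ∧
    (∀ v : Word N, mkernel sim m v v = 1 / mW m v) := by
  simpa only [massCl_const hlen, inv_pow, mul_assoc] using mkernel_via_homogeneous_general hsim hlen
    (fun a => (hm a).1) (fun a => inv_pos.2 (Nat.cast_pos.2 a.pos)) hB2 (B2_const hlen _)

end Martin
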